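/- arXiv:1912.08460 — 2 statements merged into one kernel-verified Lean document; each statement's English description precedes it below -/
import Mathlib

section
/- Let M, N ≥ 1, let T be an invertible N×N complex matrix with T^M = I_N, and let C : Fin M → Matrix (Fin N) (Fin N) ℂ. Let A be the (MN)×(MN) matrix indexed by Fin M × Fin N whose (i,j) block is T^i · C_{(j−i) mod M} · T^{−i}, let B be the block circulant matrix of block size N with blocks b_k = C_k · T^k, and let 𝒯 be the block diagonal matrix whose i-th diagonal block is T^i. Then 𝒯 is invertible and A = 𝒯 · B · 𝒯^{−1}; in particular A and B are similar. -/
/-!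
Regard matrices indexed by `Fin M × Fin N` as `M × M` matrices over the ring of `N × N` matrices
(the ring isomorphism `Matrix.compRingEquiv`). There `𝒯` is the diagonal matrix with entries `T ^ i`,
with inverse the diagonal matrix of the `T⁻¹ ^ i`. The similarity is equivalent to the intertwining
relation `A * 𝒯 = 𝒯 * B`, which entrywise is
`T ^ i * C (j - i) * T⁻¹ ^ i * T ^ j = T ^ i * C (j - i) * T ^ (j - i)`. It holds because `T ^ M = 1`
makes the power of `T` depend only on the exponent modulo `M`, whence
`T ^ i * T ^ (j - i) = T ^ j` (`pow_mul_pow_fin_sub`).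
-/

/-- The subtraction `j - i` is taken modulo `M`, so for `j < i` this uses `x ^ M = 1`. -/
theorem pow_mul_pow_fin_sub {R : Type*} [Monoid R] {M : ℕ} {x : R} (hx : x ^ M = 1)
    (i j : Fin M) : x ^ (i : ℕ) * x ^ ((j - i : Fin M) : ℕ) = x ^ (j : ℕ) := by
  have : NeZero M := ⟨by have := i.isLt; omega⟩
  have h : (j : ℕ) = ((i : ℕ) + ((j - i : Fin M) : ℕ)) % M := by
    rw [← Fin.val_add, add_sub_cancel]
  rw [← pow_add, pow_eq_pow_mod _ hx, ← h]


/-- The whole-annulus Jacobian `A`, whose `(i,j)` block is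
`T^i · C_{(j−i) mod M} · T^{−i}` for a rotation matrix `T` with `T^M = I`,
is similar, via the block diagonal matrix `𝒯 = diag(I, T, …, T^{M−1})`,
to the block circulant matrix `B` with blocks `b_k = C_k · T^k`:
`𝒯` is invertible and `A = 𝒯 · B · 𝒯⁻¹`. -/
theorem annulus_jacobian_similar_to_block_circulant (M N : ℕ) (hM : 1 ≤ M) (hN : 1 ≤ N)
    (T : Matrix (Fin N) (Fin N) ℂ) (hT : IsUnit T) (hTM : T ^ M = 1)
    (C : Fin M → Matrix (Fin N) (Fin N) ℂ)
    (A : Matrix (Fin M × Fin N) (Fin M × Fin N) ℂ)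
    (hA : ∀ (i j : Fin M) (p q : Fin N),
      A (i, p) (j, q) = (T ^ (i : ℕ) * C (j - i) * T⁻¹ ^ (i : ℕ)) p q)
    (B : Matrix (Fin M × Fin N) (Fin M × Fin N) ℂ)
    (hB : ∀ (i j : Fin M) (p q : Fin N),
      B (i, p) (j, q) = (C (j - i) * T ^ (((j - i : Fin M)) : ℕ)) p q)
    (𝒯 : Matrix (Fin M × Fin N) (Fin M × Fin N) ℂ)
    (h𝒯 : ∀ (i j : Fin M) (p q : Fin N),
      𝒯 (i, p) (j, q) = if i = j then (T ^ (i : ℕ)) p q else 0) :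
    IsUnit 𝒯 ∧ A = 𝒯 * B * 𝒯⁻¹ := by
  have hdet : IsUnit T.det := (Matrix.isUnit_iff_isUnit_det T).1 hT
  have hcomm : Commute T⁻¹ T := by
    rw [Commute, SemiconjBy, Matrix.nonsing_inv_mul T hdet, Matrix.mul_nonsing_inv T hdet]
  have hinv (i : ℕ) : T⁻¹ ^ i * T ^ i = 1 := by
    rw [← hcomm.mul_pow, Matrix.nonsing_inv_mul T hdet, one_pow]
  let φ := Matrix.compRingEquiv (Fin M) (Fin N) ℂ
  have eA : A = φ (Matrix.of fun i j => T ^ (i : ℕ) * C (j - i) * T⁻¹ ^ (i : ℕ)) := by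
    ext ⟨i, p⟩ ⟨j, q⟩
    exact hA i j p q
  have eB : B = φ (Matrix.of fun i j => C (j - i) * T ^ ((j - i : Fin M) : ℕ)) := by
    ext ⟨i, p⟩ ⟨j, q⟩
    exact hB i j p q
  have eT : 𝒯 = φ (Matrix.diagonal fun i => T ^ (i : ℕ)) := by
    ext ⟨i, p⟩ ⟨j, q⟩
    rw [h𝒯]
    change _ = Matrix.diagonal (fun i : Fin M => T ^ (i : ℕ)) i j p q
    rw [Matrix.diagonal_apply]
    split_ifs <;> rfl
  have hunit : IsUnit 𝒯 := by
    refine IsUnit.of_mul_eq_one_right (φ (Matrix.diagonal fun i => T⁻¹ ^ (i : ℕ))) ?_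
    rw [eT, ← map_mul, Matrix.diagonal_mul_diagonal]
    simp only [hinv, Matrix.diagonal_one, map_one]
  have hAT : A * 𝒯 = 𝒯 * B := by
    rw [eA, eB, eT, ← map_mul, ← map_mul]
    congr 1
    ext1 i j
    rw [Matrix.mul_diagonal, Matrix.diagonal_mul, Matrix.of_apply, Matrix.of_apply,
      ← pow_mul_pow_fin_sub hTM i j, mul_assoc, ← mul_assoc (T⁻¹ ^ (i : ℕ)), hinv, one_mul,
      mul_assoc]
  refine ⟨hunit, ?_⟩
  rw [← hAT, Matrix.mul_nonsing_inv_cancel_right _ _ ((Matrix.isUnit_iff_isUnit_det 𝒯).1 hunit)]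
end

section
/- Let M, N ≥ 1, let T be an invertible N×N complex matrix with T^M = I_N, let C : Fin M → Matrix (Fin N) (Fin N) ℂ, and let A be the (MN)×(MN) matrix indexed by Fin M × Fin N whose (i,j) block is T^i · C_{(j−i) mod M} · T^{−i}. For 0 ≤ m < M let ρ_m = exp(2πi·m/M) and B_m = ∑_{k=0}^{M−1} ρ_m^k • (C_k · T^k). Then charpoly(A) = ∏_{m=0}^{M−1} charpoly(B_m); in particular, the eigenvalues of the whole-annulus matrix A, with multiplicity, are exactly the eigenvalues of the M single-sector matrices B_m of size N×N. -/
/-! The proof is the block Fourier transform twisted by the rotation. Put `S_m = ρ_m • T`, so that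
`S_m ^ M = 1`, and view `A` as an `M × M` matrix over the ring of `N × N` matrices. Column `m` of
the matrix `P` with entries `P i m = S_m ^ i` satisfies
`∑ j, T^i C_{j-i} T^{-i} S_m^j = S_m^i ∑ k, C_k S_m^k`, that is, `A P = P D` with `D` the
diagonal matrix of the `B_m` (`twisted_mul_fourier`). By orthogonality of the characters of
`ℤ/M` (`sum_inv_mul_pow`), `P` is inverted by `Q m i = M⁻¹ ρ_m^{-i} T^{-i}`, so `A` is similar to
the block diagonal matrix of the `B_m`, whose characteristic polynomial is the product.
-/

/-- A block diagonal matrix, with the block index first, has as characteristic polynomial the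
product of those of its blocks. -/
lemma charpoly_comp_diagonal {R : Type*} [CommRing R] {m n : Type*} [Fintype m] [DecidableEq m]
    [Fintype n] [DecidableEq n] (B : m → Matrix n n R) :
    (Matrix.comp m m n n R (Matrix.diagonal B)).charpoly = ∏ i, (B i).charpoly := by
  -- `blockDiagonal` puts the block index second, hence the swap.
  have h : (Matrix.comp m m n n R (Matrix.diagonal B)).charmatrix
      = Matrix.reindex (Equiv.prodComm n m) (Equiv.prodComm n m)
          (Matrix.blockDiagonal fun i => (B i).charmatrix) := by
    ext1 ⟨i, p⟩ ⟨j, q⟩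
    by_cases hij : i = j
    · subst hij
      simp [Matrix.charmatrix_apply, Matrix.blockDiagonal_apply, Matrix.diagonal_apply]
    · simp [Matrix.blockDiagonal_apply, hij]
  rw [Matrix.charpoly, h, Matrix.det_reindex_self, Matrix.det_blockDiagonal]
  rfl

lemma pow_fin_add {G : Type*} [Monoid G] {M : ℕ} {S : G} (hS : S ^ M = 1) (k i : Fin M) :
    S ^ ((k + i : Fin M) : ℕ) = S ^ (k : ℕ) * S ^ (i : ℕ) := by
  rw [Fin.val_add, ← pow_eq_pow_mod _ hS, pow_add]

/-- Orthogonality of the characters `i ↦ ζ ^ (m * i)` of `ℤ/M`. -/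
lemma sum_inv_mul_pow {M : ℕ} {ζ : ℂ} (hζ : IsPrimitiveRoot ζ M) (m l : Fin M) :
    ∑ i : Fin M, ((ζ ^ (m : ℕ))⁻¹ * ζ ^ (l : ℕ)) ^ (i : ℕ) = if m = l then (M : ℂ) else 0 := by
  have h0 : ζ ≠ 0 := hζ.ne_zero m.pos.ne'
  split_ifs with h
  · subst h
    simp [inv_mul_cancel₀ (pow_ne_zero _ h0)]
  · have hw : (ζ ^ (m : ℕ))⁻¹ * ζ ^ (l : ℕ) ≠ 1 := by
      intro e
      rw [inv_mul_eq_one₀ (pow_ne_zero _ h0)] at e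
      exact h (Fin.ext (hζ.pow_inj m.2 l.2 e))
    rw [Fin.sum_univ_eq_sum_range (fun i => ((ζ ^ (m : ℕ))⁻¹ * ζ ^ (l : ℕ)) ^ i), geom_sum_eq hw,
      mul_pow, inv_pow, ← pow_mul, ← pow_mul, mul_comm (m : ℕ), mul_comm (l : ℕ), pow_mul, pow_mul,
      hζ.pow_eq_one]
    simp

/-- The eigenvector relation `A P = P D`, entrywise: multiplying row `i` of the twisted circulant
matrix by the column of powers of `S = c • T` reproduces `S ^ i` times the sector matrix. -/
lemma twisted_mul_fourier {M N : ℕ} {T : Matrix (Fin N) (Fin N) ℂ} (hT : IsUnit T)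
    (hTM : T ^ M = 1) (C : Fin M → Matrix (Fin N) (Fin N) ℂ) {c : ℂ} (hc : c ^ M = 1)
    (i : Fin M) :
    ∑ j : Fin M, T ^ (i : ℕ) * C (j - i) * T⁻¹ ^ (i : ℕ) * (c • T) ^ (j : ℕ)
      = (c • T) ^ (i : ℕ) * ∑ k : Fin M, c ^ (k : ℕ) • (C k * T ^ (k : ℕ)) := by
  have : NeZero M := ⟨i.pos.ne'⟩
  have hS : (c • T) ^ M = 1 := by rw [smul_pow, hc, hTM, one_smul]
  have hinv : T⁻¹ ^ (i : ℕ) * T ^ (i : ℕ) = 1 := by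
    rw [Matrix.inv_pow', Matrix.nonsing_inv_mul _ ((Matrix.isUnit_iff_isUnit_det _).1 (hT.pow _))]
  rw [← Equiv.sum_comp (Equiv.addLeft i), Finset.mul_sum]
  refine Finset.sum_congr rfl fun k _ => ?_
  rw [Equiv.coe_addLeft, add_sub_cancel_left, pow_fin_add hS, smul_pow, smul_pow]
  simp only [smul_mul_assoc, mul_smul_comm, mul_assoc]
  rw [← mul_assoc (T⁻¹ ^ (i : ℕ)), hinv, one_mul, smul_comm]


/-- The characteristic polynomial of the whole-annulus matrix `A`, whose
`(i,j)` block is `T^i · C_{(j−i) mod M} · T^{−i}` with `T^M = I`, is the product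
of the characteristic polynomials of the single-sector matrices
`B_m = ∑_k ρ_m^k • (C_k · T^k)`, `ρ_m = exp(2πi·m/M)`; in particular the
eigenvalues of `A`, with multiplicity, are exactly those of the `M` matrices
`B_m`. -/
theorem annulus_charpoly_eq_prod_sector_charpolys (M N : ℕ) (hM : 1 ≤ M) (hN : 1 ≤ N)
    (T : Matrix (Fin N) (Fin N) ℂ) (hT : IsUnit T) (hTM : T ^ M = 1)
    (C : Fin M → Matrix (Fin N) (Fin N) ℂ)
    (A : Matrix (Fin M × Fin N) (Fin M × Fin N) ℂ)
    (hA : ∀ (i j : Fin M) (p q : Fin N),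
      A (i, p) (j, q) = (T ^ (i : ℕ) * C (j - i) * T⁻¹ ^ (i : ℕ)) p q) :
    A.charpoly = ∏ m : Fin M,
      (∑ k : Fin M,
        Complex.exp (2 * Real.pi * Complex.I * (m : ℕ) / (M : ℕ)) ^ (k : ℕ) •
          (C k * T ^ (k : ℕ))).charpoly := by
  have hM0 : M ≠ 0 := Nat.one_le_iff_ne_zero.1 hM
  have hζ := Complex.isPrimitiveRoot_exp M hM0
  set ζ := Complex.exp (2 * Real.pi * Complex.I / M) with hζdef
  have hρ : ∀ m : Fin M, Complex.exp (2 * Real.pi * Complex.I * (m : ℕ) / (M : ℕ))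
      = ζ ^ (m : ℕ) := by
    intro m
    rw [hζdef, ← Complex.exp_nat_mul]
    congr 1
    ring
  simp only [hρ]
  have hρM : ∀ m : Fin M, (ζ ^ (m : ℕ)) ^ M = 1 := fun m => by
    rw [← pow_mul, mul_comm, pow_mul, hζ.pow_eq_one, one_pow]
  set B : Fin M → Matrix (Fin N) (Fin N) ℂ := fun m =>
    ∑ k : Fin M, (ζ ^ (m : ℕ)) ^ (k : ℕ) • (C k * T ^ (k : ℕ)) with hB
  let φ := Matrix.compRingEquiv (Fin M) (Fin N) ℂ
  let A' : Matrix (Fin M) (Fin M) (Matrix (Fin N) (Fin N) ℂ) :=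
    Matrix.of fun i j => T ^ (i : ℕ) * C (j - i) * T⁻¹ ^ (i : ℕ)
  let P : Matrix (Fin M) (Fin M) (Matrix (Fin N) (Fin N) ℂ) :=
    Matrix.of fun i m => (ζ ^ (m : ℕ) • T) ^ (i : ℕ)
  let Q : Matrix (Fin M) (Fin M) (Matrix (Fin N) (Fin N) ℂ) :=
    Matrix.of fun m i => ((M : ℂ)⁻¹ * ((ζ ^ (m : ℕ))⁻¹) ^ (i : ℕ)) • T⁻¹ ^ (i : ℕ)
  have hAφ : A = φ A' := by
    ext ⟨i, p⟩ ⟨j, q⟩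
    exact hA i j p q
  have hAP : A' * P = P * Matrix.diagonal B := by
    ext1 i m
    rw [Matrix.mul_apply, Matrix.mul_diagonal]
    exact twisted_mul_fourier hT hTM C (hρM m) i
  have hQP : Q * P = 1 := by
    ext1 m l
    have hterm : ∀ i : Fin M, Q m i * P i l
        = ((M : ℂ)⁻¹ * ((ζ ^ (m : ℕ))⁻¹ * ζ ^ (l : ℕ)) ^ (i : ℕ)) •
          (1 : Matrix (Fin N) (Fin N) ℂ) := by
      intro i
      have hinv : T⁻¹ ^ (i : ℕ) * T ^ (i : ℕ) = 1 := by
        rw [Matrix.inv_pow',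
          Matrix.nonsing_inv_mul _ ((Matrix.isUnit_iff_isUnit_det _).1 (hT.pow _))]
      simp only [Q, P, Matrix.of_apply]
      rw [smul_pow, smul_mul_smul_comm, hinv, mul_pow, mul_assoc]
    rw [Matrix.mul_apply, Finset.sum_congr rfl fun i _ => hterm i, ← Finset.sum_smul,
      ← Finset.mul_sum, sum_inv_mul_pow hζ, Matrix.one_apply]
    split_ifs <;> simp [hM0]
  have hφQP : φ Q * φ P = 1 := by rw [← map_mul, hQP, map_one]
  have hφPQ : φ P * φ Q = 1 := mul_eq_one_comm.1 hφQP
  have hconj : A = φ P * (φ (Matrix.diagonal B) * φ Q) := by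
    rw [← mul_assoc, ← map_mul φ P, ← hAP, map_mul, mul_assoc, hφPQ, mul_one, hAφ]
  rw [hconj, Matrix.charpoly_mul_comm, mul_assoc, hφQP, mul_one]
  exact charpoly_comp_diagonal B
end
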